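/- Let H₀, H₀', J₀, J₀', H₁, J₁, J₁', ε₀, ε₁, k₀, k₁, α be arbitrary complex numbers with ε₁ ≠ 0, and set P := J₀ + α·k₀·J₀'. Define M₂ := ![![k₀·H₀'·P, −ε₀·H₀·P], ![−k₁·H₁·J₁', ε₁·H₁·J₁]] and M₃ := ![![k₀·H₀'·P, −ε₀·H₀·P, 0], ![−1, 0, H₁·J₁], ![0, −1, (k₁/ε₁)·H₁·J₁']]. Then the linear map ℂ³ → ℂ³ defined by M₃ is injective if and only if the linear map ℂ² → ℂ² defined by M₂ is injective. Equivalently, M₃ has a nonzero vector in its kernel if and only if M₂ has a nonzero vector in its kernel. -/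

import Mathlib

theorem M3_injective_iff_M2_injective
    (H₀ H₀' J₀ J₀' H₁ J₁ J₁' ε₀ ε₁ k₀ k₁ α : ℂ) (hε₁ : ε₁ ≠ 0)
    (P : ℂ) (hP : P = J₀ + α * k₀ * J₀')
    (M₂ : Matrix (Fin 2) (Fin 2) ℂ)
    (hM₂ : M₂ = !![k₀ * H₀' * P, -ε₀ * H₀ * P;
                   -k₁ * H₁ * J₁', ε₁ * H₁ * J₁])
    (M₃ : Matrix (Fin 3) (Fin 3) ℂ)
    (hM₃ : M₃ = !![k₀ * H₀' * P, -ε₀ * H₀ * P, 0;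
                   -1, 0, H₁ * J₁;
                   0, -1, (k₁ / ε₁) * H₁ * J₁']) :
    (Function.Injective M₃.mulVec ↔ Function.Injective M₂.mulVec) ∧
    ((∃ v : Fin 3 → ℂ, v ≠ 0 ∧ M₃.mulVec v = 0) ↔
     (∃ w : Fin 2 → ℂ, w ≠ 0 ∧ M₂.mulVec w = 0)) := by
  have hdet : M₂.det = ε₁ * M₃.det := by
    rw [hM₂, hM₃, Matrix.det_fin_two, Matrix.det_fin_three]
    simp
    field_simp
  constructor
  · rw [Matrix.mulVec_injective_iff_isUnit, Matrix.mulVec_injective_iff_isUnit,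
      Matrix.isUnit_iff_isUnit_det, Matrix.isUnit_iff_isUnit_det, isUnit_iff_ne_zero,
      isUnit_iff_ne_zero, hdet]
    simp [hε₁]
  · rw [Matrix.exists_mulVec_eq_zero_iff, Matrix.exists_mulVec_eq_zero_iff, hdet]
    simp [hε₁]
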